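/- The computable FS-jump id⁺ of the identity relation on ℕ is computably bireducible with the relation =^{ce} of equality of c.e. sets. -/

import Mathlib

/-- The `e`-th partial computable function. -/
def phi (e : ℕ) : ℕ →. ℕ :=
  Nat.Partrec.Code.eval (Denumerable.ofNat Nat.Partrec.Code e)

/-- `W_e`, the `e`-th c.e. set: the domain of `φ_e`. -/
def WSet (e : ℕ) : Set ℕ := (phi e).Dom

/-- The `E`-equivalence class of `k`. -/
def classOf (E : ℕ → ℕ → Prop) (k : ℕ) : Set ℕ := {x | E k x}

/-- Computable reducibility of binary relations on ℕ. -/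
def Reduces (E F : ℕ → ℕ → Prop) : Prop :=
  ∃ f : ℕ → ℕ, Computable f ∧ ∀ m n, E m n ↔ F (f m) (f n)

/-- The computable FS-jump of `E`: `e E⁺ e'` iff the set of `E`-classes of elements
of `ran φ_e` equals the set of `E`-classes of elements of `ran φ_{e'}`. -/
def FSJump (E : ℕ → ℕ → Prop) : ℕ → ℕ → Prop :=
  fun e e' => classOf E '' (phi e).ran = classOf E '' (phi e').ran

/-- Equality of c.e. sets: `e =^{ce} e'` iff `W_e = W_{e'}`. -/
def eqCE : ℕ → ℕ → Prop := fun e e' => WSet e = WSet e'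

/-!
For a c.e. equivalence relation `E`, the `E`-classes met by `ran φ_e` are determined by their union,
which is c.e. uniformly in `e`; an index for it therefore reduces `E⁺` to `=^{ce}`. Conversely, if
`h` reduces `id` to `E`, then restricting `h` to `W_e` gives a partial computable function with
range `h(W_e)`, and distinct c.e. sets `W_e` yield distinct sets of `E`-classes.
-/

open Encodable Nat.Partrec

section RecursivelyEnumerable

variable {α β : Type*} [Primcodable α] [Primcodable β]

theorem repred_eq : REPred fun q : α × α => q.1 = q.2 :=
  (PrimrecPred.computablePred Primrec.eq).to_re

theorem repred_exists_mem {f : α →. β} {p : α → β → Prop} (hf : Partrec f)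
    (hp : REPred fun q : α × β => p q.1 q.2) : REPred fun a => ∃ b ∈ f a, p a b :=
  (hf.bind hp.to₂).dom_re.of_eq fun a => by simp [Part.dom_iff_mem]

theorem repred_exists {p : α → β → Prop} (hp : REPred fun q : α × β => p q.1 q.2) :
    REPred fun a => ∃ b, p a b := by
  obtain ⟨c, hc⟩ := Code.exists_code.1 hp
  have dom_eval_iff (a : α) (m : ℕ) :
      (c.eval (Nat.pair (encode a) m)).Dom ↔ ∃ b ∈ (decode m : Option β), p a b := by
    rw [hc]
    cases h : (decode m : Option β) <;> simp [h, Part.dom_iff_mem]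
  -- Dovetailing: stage `k` codes a candidate witness together with a bound on the running time.
  let stage (a : α) (k : ℕ) : Option ℕ :=
    c.evaln k.unpair.2 (Nat.pair (encode a) k.unpair.1)
  have stage_computable : Computable₂ stage := by
    refine (Code.primrec_evaln.comp (.pair (.pair ?_ (.const c)) ?_)).to_comp
    · exact Primrec.snd.comp (Primrec.unpair.comp Primrec.snd)
    · exact Primrec₂.natPair.comp (Primrec.encode.comp Primrec.fst)
        (Primrec.fst.comp (Primrec.unpair.comp Primrec.snd))
  refine (Partrec.rfindOpt stage_computable).dom_re.of_eq fun a => ?_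
  calc (Nat.rfindOpt (stage a)).Dom
      ↔ ∃ k x, x ∈ stage a k := Nat.rfindOpt_dom
    _ ↔ ∃ m s x, x ∈ c.evaln s (Nat.pair (encode a) m) :=
        ⟨fun ⟨k, hk⟩ => ⟨k.unpair.1, k.unpair.2, hk⟩,
          fun ⟨m, s, hs⟩ => ⟨Nat.pair m s, by simpa [stage] using hs⟩⟩
    _ ↔ ∃ m, (c.eval (Nat.pair (encode a) m)).Dom :=
        exists_congr fun m => by
          simp only [Part.dom_iff_mem, Code.evaln_complete]
          exact exists_comm
    _ ↔ ∃ b, p a b := by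
        simp only [dom_eval_iff]
        exact ⟨fun ⟨_, b, _, hb⟩ => ⟨b, hb⟩, fun ⟨b, hb⟩ => ⟨encode b, b, encodek b, hb⟩⟩

end RecursivelyEnumerable

section Indices

variable {α : Type*} [Primcodable α]

theorem partrec₂_phi : Partrec₂ phi :=
  Code.eval_part.comp ((Computable.ofNat Code).comp Computable.fst) Computable.snd

theorem exists_computable_phi_eq {g : α → ℕ →. ℕ} (hg : Partrec₂ g) :
    ∃ f : α → ℕ, Computable f ∧ ∀ a, phi (f a) = g a := by
  obtain ⟨c, hc⟩ := Code.exists_code.1 hg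
  refine ⟨fun a => encode (c.curry (encode a)), ?_, fun a => ?_⟩
  · exact (Primrec.encode.comp
      (Code.primrec₂_curry.comp (Primrec.const c) Primrec.encode)).to_comp
  · funext n
    simp [phi, Code.eval_curry, hc, Part.map_id']

theorem exists_computable_wSet_eq {p : α → ℕ → Prop} (hp : REPred fun q : α × ℕ => p q.1 q.2) :
    ∃ f : α → ℕ, Computable f ∧ ∀ a, WSet (f a) = {n | p a n} := by
  obtain ⟨f, hf, phi_f⟩ := exists_computable_phi_eq (hp.map (Computable.const 0).to₂).to₂
  refine ⟨f, hf, fun a => ?_⟩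
  ext n
  simp [WSet, phi_f, Part.dom_iff_mem]

theorem exists_computable_ran_phi_eq_image_wSet {h : ℕ → ℕ} (hh : Computable h) :
    ∃ f : ℕ → ℕ, Computable f ∧ ∀ e, (phi (f e)).ran = h '' WSet e := by
  have restrict_partrec : Partrec₂ fun e n => (phi e n).map fun _ => h n :=
    partrec₂_phi.map (hh.comp (Computable.snd.comp Computable.fst)).to₂
  obtain ⟨f, hf, phi_f⟩ := exists_computable_phi_eq restrict_partrec
  refine ⟨f, hf, fun e => ?_⟩
  ext y
  simp [PFun.ran, WSet, phi_f, PFun.mem_dom]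

end Indices

section Jump

variable {E : ℕ → ℕ → Prop}

theorem classOf_eq_classOf_iff (hE : Equivalence E) {a b : ℕ} :
    classOf E a = classOf E b ↔ E a b := by
  refine ⟨fun h => ?_, fun hab => ?_⟩
  · have hb : b ∈ classOf E b := hE.refl b
    rwa [← h] at hb
  · ext x
    exact ⟨hE.trans (hE.symm hab), hE.trans hab⟩

theorem image_classOf_biUnion_classOf (hE : Equivalence E) (A : Set ℕ) :
    classOf E '' (⋃ x ∈ A, classOf E x) = classOf E '' A := by
  apply Set.Subset.antisymm
  · rintro _ ⟨y, hy, rfl⟩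
    obtain ⟨x, hx, hxy⟩ := Set.mem_iUnion₂.1 hy
    exact ⟨x, hx, (classOf_eq_classOf_iff hE).2 hxy⟩
  · exact Set.image_mono fun x hx => Set.mem_biUnion hx (hE.refl x)

theorem fsJump_iff_biUnion_classOf_eq (hE : Equivalence E) {e e' : ℕ} :
    FSJump E e e' ↔ ⋃ x ∈ (phi e).ran, classOf E x = ⋃ x ∈ (phi e').ran, classOf E x := by
  refine ⟨fun h => ?_, fun h => ?_⟩
  · rw [← Set.sUnion_image, ← Set.sUnion_image, h]
  · rw [FSJump, ← image_classOf_biUnion_classOf hE, h, image_classOf_biUnion_classOf hE]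

theorem repred_mem_biUnion_ran_classOf (hre : REPred fun q : ℕ × ℕ => E q.1 q.2) :
    REPred fun q : ℕ × ℕ => q.2 ∈ ⋃ x ∈ (phi q.1).ran, classOf E x := by
  have value_partrec : Partrec fun r : (ℕ × ℕ) × ℕ => phi r.1.1 r.2 :=
    partrec₂_phi.comp (Computable.fst.comp Computable.fst) Computable.snd
  have related_re : REPred fun s : ((ℕ × ℕ) × ℕ) × ℕ => E s.2 s.1.1.2 :=
    hre.comp (Computable.snd.pair (Computable.snd.comp (Computable.fst.comp Computable.fst)))
  refine (repred_exists (p := fun q n => ∃ x ∈ phi q.1 n, E x q.2)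
    (repred_exists_mem value_partrec related_re)).of_eq fun q => ?_
  simp only [PFun.ran, classOf, Set.mem_iUnion, Set.mem_ofPred_eq, exists_prop]
  exact ⟨fun ⟨n, x, hx, hxy⟩ => ⟨x, ⟨n, hx⟩, hxy⟩, fun ⟨x, ⟨n, hx⟩, hxy⟩ => ⟨n, x, hx, hxy⟩⟩

theorem fsJump_reduces_eqCE (hE : Equivalence E) (hre : REPred fun q : ℕ × ℕ => E q.1 q.2) :
    Reduces (FSJump E) eqCE := by
  obtain ⟨f, hf, wSet_f⟩ := exists_computable_wSet_eq
    (p := fun e y => y ∈ ⋃ x ∈ (phi e).ran, classOf E x) (repred_mem_biUnion_ran_classOf hre)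
  refine ⟨f, hf, fun m n => ?_⟩
  rw [fsJump_iff_biUnion_classOf_eq hE, eqCE, wSet_f, wSet_f, Set.ofPred_mem_eq,
    Set.ofPred_mem_eq]

theorem eqCE_reduces_fsJump (hE : Equivalence E) (hid : Reduces (@Eq ℕ) E) :
    Reduces eqCE (FSJump E) := by
  obtain ⟨h, hh, eq_iff⟩ := hid
  have classOf_injective : Function.Injective fun n => classOf E (h n) := fun m n hmn =>
    (eq_iff m n).2 ((classOf_eq_classOf_iff hE).1 hmn)
  obtain ⟨f, hf, ran_f⟩ := exists_computable_ran_phi_eq_image_wSet hh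
  refine ⟨f, hf, fun m n => ?_⟩
  rw [FSJump, ran_f, ran_f, Set.image_image, Set.image_image,
    classOf_injective.image_injective.eq_iff, eqCE]

theorem jump_id_bireducible_eqCE_general (hE : Equivalence E)
    (hre : REPred fun q : ℕ × ℕ => E q.1 q.2) (hid : Reduces (@Eq ℕ) E) :
    Reduces (FSJump E) eqCE ∧ Reduces eqCE (FSJump E) :=
  ⟨fsJump_reduces_eqCE hE hre, eqCE_reduces_fsJump hE hid⟩

end Jump

/-- `id⁺` is computably bireducible with `=^{ce}`. -/
theorem jump_id_bireducible_eqCE :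
    Reduces (FSJump (@Eq ℕ)) eqCE ∧ Reduces eqCE (FSJump (@Eq ℕ)) := by
  exact jump_id_bireducible_eqCE_general eq_equivalence repred_eq
    ⟨id, Computable.id, fun _ _ => Iff.rfl⟩
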